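/- The equality (7/4)·ζ(3) = ∑_{k=0}^∞ (3/2 + 2k) / ((2k+1)³ · binom-free form): explicitly, ∑_{k=0}^∞ ((1/2)_k (1)_k³ / ((2)_k (3/2)_k³)) · (3/2+2k) = ∑_{k=0}^∞ (3+4k)/((2k+1)³(k+1)) · c_k for the appropriate simplification, and this equals (7/4)ζ(3). -/

import Mathlib

noncomputable def poch (x : ℝ) (n : ℕ) : ℝ := ∏ i ∈ Finset.range n, (x + i)

noncomputable def zeta3 : ℝ := ∑' n : ℕ, 1 / ((n : ℝ) + 1) ^ 3

noncomputable def tt (x : ℝ) : ℕ → ℝ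
  | 0 => 1 / x ^ 2
  | (k + 1) => tt x k * (((k : ℝ) + 1) / (x + k + 1)) ^ 2

noncomputable def FF (x : ℝ) (k : ℕ) : ℝ := tt x k * (1 / ((k : ℝ) + 1) + 1 / (k + x))

noncomputable def GG (x : ℝ) (k : ℕ) : ℝ := tt x k * (1 / ((k : ℝ) + x) + 1 / x)

lemma tt_nonneg (x : ℝ) (k : ℕ) : 0 ≤ tt x k := by
  induction k with
  | zero => simp only [tt]; positivity
  | succ k ih => simp only [tt]; positivity

lemma tt_shift (x : ℝ) (hx : 0 < x) (k : ℕ) :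
    tt (x + 1) k = tt x k * (x / (x + k + 1)) ^ 2 := by
  induction k with
  | zero => simp only [tt]; push_cast; field_simp; ring
  | succ k ih =>
    simp only [tt]
    rw [ih]; push_cast
    have h1 : x + k + 1 ≠ 0 := by positivity
    have h2 : x + 1 + k + 1 ≠ 0 := by positivity
    have h3 : x + (k + 1) + 1 ≠ 0 := by positivity
    field_simp
    ring

lemma tt_le (x : ℝ) (hx : 1 / 2 ≤ x) (k : ℕ) : tt x k ≤ 1 / (x ^ 2 * (k + 1)) := by
  have hx0 : 0 < x := by linarith
  induction k with
  | zero => simp [tt]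
  | succ k ih =>
    simp only [tt]; push_cast
    have hk : (0 : ℝ) ≤ k := Nat.cast_nonneg k
    have h : (((k : ℝ) + 1) / (x + k + 1)) ^ 2 ≤ ((k : ℝ) + 1) / (k + 1 + 1) := by
      rw [div_pow, div_le_div_iff₀ (by positivity) (by positivity)]
      have h2 : ((k : ℝ) + 1) * (k + 1 + 1) ≤ (x + k + 1) ^ 2 := by nlinarith
      nlinarith
    calc _ ≤ 1 / (x ^ 2 * (k + 1)) * (((k : ℝ) + 1) / (k + 1 + 1)) := by gcongr
      _ = _ := by field_simp

lemma FF_nonneg (x : ℝ) (hx : 1 / 2 ≤ x) (k : ℕ) : 0 ≤ FF x k := by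
  have := tt_nonneg x k
  have hx0 : 0 < x := by linarith
  unfold FF; positivity

lemma FF_le (x : ℝ) (hx : 1 / 2 ≤ x) (k : ℕ) :
    FF x k ≤ 3 / x ^ 2 * (1 / ((k : ℝ) + 1) ^ 2) := by
  have hx0 : 0 < x := by linarith
  have hk : (0 : ℝ) ≤ k := Nat.cast_nonneg k
  have h : 1 / ((k : ℝ) + x) ≤ 2 / (k + 1) := by
    rw [div_le_div_iff₀ (by positivity) (by positivity)]; linarith
  have h2 : 1 / ((k : ℝ) + 1) + 1 / (k + x) ≤ 3 / (k + 1) := by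
    calc _ ≤ 1 / ((k : ℝ) + 1) + 2 / (k + 1) := by gcongr
      _ = _ := by ring
  calc FF x k ≤ 1 / (x ^ 2 * (k + 1)) * (3 / (k + 1)) := by
        unfold FF
        exact mul_le_mul (tt_le x hx k) h2 (by positivity) (by positivity)
    _ = _ := by field_simp

lemma sq_summable : Summable (fun k : ℕ => 1 / ((k : ℝ) + 1) ^ 2) := by
  have := (summable_nat_add_iff 1).2 (Real.summable_one_div_nat_pow.2 (by norm_num : 1 < 2))
  simpa using this

lemma FF_summable (x : ℝ) (hx : 1 / 2 ≤ x) : Summable (FF x) :=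
  Summable.of_nonneg_of_le (FF_nonneg x hx) (FF_le x hx) (sq_summable.mul_left _)

lemma tele (x : ℝ) (hx : 0 < x) (k : ℕ) :
    FF x k - FF (x + 1) k = GG x k - GG x (k + 1) := by
  unfold FF GG
  rw [tt_shift x hx]
  simp only [tt]; push_cast
  have h1 : x + k + 1 ≠ 0 := by positivity
  have h2 : (k : ℝ) + (x + 1) ≠ 0 := by positivity
  have h3 : (k : ℝ) + 1 + x ≠ 0 := by positivity
  have h4 : (k : ℝ) + x ≠ 0 := by positivity
  have e2 : (k : ℝ) + (x + 1) = x + k + 1 := by ring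
  have e3 : (k : ℝ) + 1 + x = x + k + 1 := by ring
  rw [e2, e3]
  field_simp
  ring

lemma GG_tendsto (x : ℝ) (hx : 1 / 2 ≤ x) :
    Filter.Tendsto (GG x) Filter.atTop (nhds 0) := by
  have hx0 : 0 < x := by linarith
  have h := (tendsto_one_div_add_atTop_nhds_zero_nat (𝕜 := ℝ)).const_mul (1 / x ^ 2 * (2 / x))
  rw [mul_zero] at h
  refine squeeze_zero (fun k => ?_) (fun k => ?_) h
  · have := tt_nonneg x k
    unfold GG; positivity
  · have h2 : 1 / ((k : ℝ) + x) + 1 / x ≤ 2 / x := by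
      have : 1 / ((k : ℝ) + x) ≤ 1 / x := by
        apply one_div_le_one_div_of_le hx0
        have : (0 : ℝ) ≤ k := Nat.cast_nonneg k
        linarith
      calc _ ≤ 1 / x + 1 / x := by gcongr
        _ = _ := by ring
    calc GG x k ≤ 1 / (x ^ 2 * (k + 1)) * (2 / x) := by
          unfold GG
          exact mul_le_mul (tt_le x hx k) h2 (by positivity) (by positivity)
      _ = _ := by field_simp

lemma S_step (x : ℝ) (hx : 1 / 2 ≤ x) : ∑' k, FF x k = ∑' k, FF (x + 1) k + 2 / x ^ 3 := by
  have hx0 : 0 < x := by linarith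
  have s1 := FF_summable x hx
  have s2 := FF_summable (x + 1) (by linarith)
  have h := (s1.hasSum.sub s2.hasSum).tendsto_sum_nat
  have h' : Filter.Tendsto (fun n => ∑ i ∈ Finset.range n, (FF x i - FF (x + 1) i))
      Filter.atTop (nhds (GG x 0 - 0)) := by
    simp_rw [tele x hx0, Finset.sum_range_sub']
    exact (GG_tendsto x hx).const_sub _
  have e := tendsto_nhds_unique h h'
  have g : GG x 0 = 2 / x ^ 3 := by
    simp only [GG, tt]; push_cast; rw [zero_add]; field_simp; ring
  linarith

lemma S_iter (N : ℕ) : ∑' k, FF (1 / 2) k =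
    ∑' k, FF (N + 1 / 2) k + ∑ n ∈ Finset.range N, 2 / ((n : ℝ) + 1 / 2) ^ 3 := by
  induction N with
  | zero => simp
  | succ N ih =>
    rw [ih, Finset.sum_range_succ, S_step _ (by have : (0:ℝ) ≤ N := Nat.cast_nonneg N
                                                linarith)]
    push_cast
    rw [show (N : ℝ) + 1 / 2 + 1 = N + 1 + 1 / 2 by ring]
    ring

lemma S_tendsto : Filter.Tendsto (fun N : ℕ => ∑' k, FF (N + 1 / 2) k)
    Filter.atTop (nhds 0) := by
  have h0 := (tendsto_one_div_add_atTop_nhds_zero_nat (𝕜 := ℝ)).const_mul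
    (12 * ∑' k : ℕ, 1 / ((k : ℝ) + 1) ^ 2)
  rw [mul_zero] at h0
  have hp : 0 ≤ ∑' k : ℕ, 1 / ((k : ℝ) + 1) ^ 2 := tsum_nonneg fun k => by positivity
  refine squeeze_zero (fun N => ?_) (fun N => ?_) h0
  · exact tsum_nonneg (FF_nonneg _ (by have : (0:ℝ) ≤ N := Nat.cast_nonneg N
                                       linarith))
  · have hN : (0:ℝ) ≤ N := Nat.cast_nonneg N
    have hx : 1 / 2 ≤ (N : ℝ) + 1 / 2 := by linarith
    have h1 := (FF_summable _ hx).tsum_le_tsum (FF_le _ hx) (sq_summable.mul_left _)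
    rw [tsum_mul_left] at h1
    have h2 : 3 / ((N : ℝ) + 1 / 2) ^ 2 ≤ 12 * (1 / ((N : ℝ) + 1)) := by
      rw [mul_one_div, div_le_div_iff₀ (by positivity) (by positivity)]
      nlinarith
    calc _ ≤ _ := h1
      _ ≤ 12 * (1 / ((N : ℝ) + 1)) * ∑' k : ℕ, 1 / ((k : ℝ) + 1) ^ 2 := by gcongr
      _ = _ := by ring

lemma S_hasSum : HasSum (fun n : ℕ => 2 / ((n : ℝ) + 1 / 2) ^ 3) (∑' k, FF (1 / 2) k) := by
  rw [hasSum_iff_tendsto_nat_of_nonneg (fun n => by positivity)]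
  have h := S_tendsto.const_sub (∑' k, FF (1 / 2) k)
  rw [sub_zero] at h
  refine h.congr fun N => ?_
  rw [S_iter N]; ring

lemma hasSum_aux {f g : ℕ → ℝ} {a : ℝ} (h : HasSum g a) (e : ∀ k, f k = g k) : HasSum f a := by
  rw [funext e]; exact h

lemma S_eq : ∑' k, FF (1 / 2) k = 14 * zeta3 := by
  have hs : Summable (fun n : ℕ => 1 / ((n : ℝ) + 1) ^ 3) := by
    have := (summable_nat_add_iff 1).2 (Real.summable_one_div_nat_pow.2 (by norm_num : 1 < 3))
    simpa using this
  have hz : HasSum (fun n : ℕ => 1 / ((n : ℝ) + 1) ^ 3) zeta3 := hs.hasSum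
  have he : HasSum (fun k : ℕ => 1 / (((2 * k : ℕ) : ℝ) + 1) ^ 3)
      (1 / 16 * ∑' k, FF (1 / 2) k) := by
    refine hasSum_aux (S_hasSum.mul_left (1 / 16)) fun k => ?_
    push_cast
    rw [show (k : ℝ) + 1 / 2 = (2 * k + 1) / 2 by ring]
    field_simp
    ring
  have ho : HasSum (fun k : ℕ => 1 / (((2 * k + 1 : ℕ) : ℝ) + 1) ^ 3) (1 / 8 * zeta3) := by
    refine hasSum_aux (hz.mul_left (1 / 8)) fun k => ?_
    push_cast
    rw [show (2 * (k : ℝ) + 1 + 1) = 2 * (k + 1) by ring]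
    field_simp
    ring
  have := (HasSum.even_add_odd (f := fun n : ℕ => 1 / ((n : ℝ) + 1) ^ 3) he ho).unique hz
  linarith

lemma poch_succ (x : ℝ) (k : ℕ) : poch x (k + 1) = poch x k * (x + k) :=
  Finset.prod_range_succ _ _

lemma poch_pos (x : ℝ) (hx : 0 < x) (k : ℕ) : 0 < poch x k :=
  Finset.prod_pos fun i _ => by positivity

lemma poch_half (k : ℕ) : poch (3 / 2) k = poch (1 / 2) k * (2 * k + 1) := by
  induction k with
  | zero => simp [poch]
  | succ k ih => rw [poch_succ, poch_succ, ih]; push_cast; ring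

lemma poch_two (k : ℕ) : poch 2 k = poch 1 k * (k + 1) := by
  induction k with
  | zero => simp [poch]
  | succ k ih => rw [poch_succ, poch_succ, ih]; push_cast; ring

lemma tt_half (k : ℕ) : tt (1 / 2) k = 4 * (poch 1 k / poch (3 / 2) k) ^ 2 := by
  induction k with
  | zero => simp [poch, tt]; norm_num
  | succ k ih =>
    have := poch_pos (3 / 2) (by norm_num) k
    simp only [tt]
    rw [poch_succ, poch_succ, ih, mul_div_mul_comm, mul_pow]
    rw [show (1 / 2 : ℝ) + k + 1 = 3 / 2 + k by ring, add_comm (1 : ℝ) k]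
    ring

theorem stmt18 :
    HasSum (fun k : ℕ =>
      poch (1/2) k * poch 1 k ^ 3 / (poch 2 k * poch (3/2) k ^ 3) *
        ((3:ℝ)/2 + 2 * k))
      (7/4 * zeta3) := by
  have h := (FF_summable (1 / 2) le_rfl).hasSum.mul_left (1 / 8)
  rw [S_eq] at h
  rw [show (7 / 4 * zeta3) = 1 / 8 * (14 * zeta3) by ring]
  refine hasSum_aux h fun k => ?_
  · have h1 := poch_pos (1 / 2) (by norm_num) k
    have h2 := poch_pos 1 (by norm_num) k
    have h3 : (k : ℝ) + 1 / 2 ≠ 0 := by positivity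
    unfold FF
    rw [tt_half, poch_half, poch_two]
    generalize poch (1 / 2) k = a at *
    generalize poch 1 k = b at *
    rw [show (k : ℝ) + 1 / 2 = (2 * k + 1) / 2 by ring]
    field_simp
    ring
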